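/- arXiv:1905.12213 — 3 statements merged into one kernel-verified Lean document; each statement's English description precedes it below -/
import Mathlib

section
/- Fix a probability measure p on a sample space X × Y, an integer N ≥ 1, a measurable loss ℓ : W × (X × Y) → [0,1] on a measurable weight space W, real numbers β > 1/2 and δ ∈ (0,1), and a probability measure P on W. For a dataset D = ((x_1,y_1),…,(x_N,y_N)) and a probability measure Q on W, write L_D(Q) = E_{w∼Q}[(1/N) Σ_{i=1}^N ℓ(w,(x_i,y_i))] and L_test(Q) = E_{w∼Q} E_{(x,y)∼p}[ℓ(w,(x,y))]. Then, with probability at least 1 − δ over D sampled i.i.d. from p^{⊗N}, simultaneously for every probability measure Q on W: L_test(Q) ≤ (1 − 1/(2β))^{-1} [ L_D(Q) + (β/N) ( KL(Q‖P) + log(1/δ) ) ]. -/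
/-!
Write `lam = 1 / β`, `L w = E_z[ℓ (w, z)]` and
`gap (w, D) = ∑ i, lam * ((1 - lam / 2) * L w - ℓ (w, D i))`.

The elementary inequality `exp (-x) ≤ 1 - x + x ^ 2 / 2` for `x ≥ 0`, applied to `x = lam * ℓ` with
`ℓ ^ 2 ≤ ℓ`, shows that each summand of `gap` has exponential moment at most one
(`integral_exp_term_le_one`); by independence the same holds for `exp (gap (w, ·))`. Averaging over
the prior `P` and exchanging the integrals, `Z D = E_{w ∼ P}[exp (gap (w, D))]` has expectation at
most one, so by Markov's inequality `Z D < 1 / δ` outside an event of probability at most `δ`.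

On this event, which does not involve `Q`, the Donsker–Varadhan inequality
`E_Q[f] ≤ KL(Q‖P) + log E_P[exp f]` (`integral_le_llr_add_log`) with `f = gap (·, D)` gives
`(N / β) * ((1 - 1 / (2 * β)) * L_test(Q) - L_D(Q)) ≤ KL(Q‖P) + log (1 / δ)` for all `Q` at once,
which is the claim after rearrangement.
-/

/-!
PAC-Bayes bound (McAllester), Theorem 2.1, eq. (5):
with probability at least 1 − δ over the i.i.d. sample D ∼ p^⊗N, simultaneously for every
probability measure Q on the weight space W,
L_test(Q) ≤ (1 − 1/(2β))⁻¹ [ L_D(Q) + (β/N)(KL(Q‖P) + log(1/δ)) ].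
-/

open MeasureTheory ENNReal

open scoped Classical in
/-- Kullback–Leibler divergence: `E_{w∼Q}[log (dQ/dP)(w)]` when `Q ≪ P` (and the integral
converges), `+∞` otherwise. -/
noncomputable def klDiv {W : Type*} [MeasurableSpace W] (Q P : Measure W) : ℝ≥0∞ :=
  if Q ≪ P ∧ Integrable (llr Q P) Q then ENNReal.ofReal (∫ w, llr Q P w ∂Q) else ⊤

namespace PacBayes

lemma exp_neg_le_quadratic {x : ℝ} (hx : 0 ≤ x) : Real.exp (-x) ≤ 1 - x + x ^ 2 / 2 := by
  have h1 := Real.quadratic_le_exp_of_nonneg hx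
  have h2 : Real.exp (-x) * Real.exp x = 1 := by rw [← Real.exp_add]; simp
  have h3 : 0 < 1 - x + x ^ 2 / 2 := by nlinarith [sq_nonneg (x - 1)]
  -- `(1 - x + x ^ 2 / 2) * (1 + x + x ^ 2 / 2) = 1 + x ^ 4 / 4 ≥ 1`
  have h4 : 1 ≤ (1 - x + x ^ 2 / 2) * Real.exp x := by
    nlinarith [mul_le_mul_of_nonneg_left h1 h3.le, sq_nonneg (x ^ 2)]
  exact le_of_mul_le_mul_right (h2.trans_le h4) (Real.exp_pos x)

/-- Exponential moment bound for a single sample: since `u ^ 2 ≤ u` on `[0, 1]`,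
`exp (-lam * u) ≤ 1 - lam * (1 - lam / 2) * u`, and then `1 + y ≤ exp y` absorbs the mean. -/
lemma integral_exp_term_le_one {Z : Type*} [MeasurableSpace Z] (p : Measure Z)
    [IsProbabilityMeasure p] (u : Z → ℝ) (hu : Measurable u) (hb : ∀ z, u z ∈ Set.Icc (0 : ℝ) 1)
    (lam : ℝ) (hlam : 0 ≤ lam) :
    ∫ z, Real.exp (lam * ((1 - lam / 2) * (∫ z', u z' ∂p) - u z)) ∂p ≤ 1 := by
  set L := ∫ z', u z' ∂p
  have hui : Integrable u p := Integrable.of_mem_Icc 0 1 hu.aemeasurable (ae_of_all _ hb)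
  have hexp : ∀ z, Real.exp (-(lam * u z)) ≤ 1 - lam * (1 - lam / 2) * u z := fun z => by
    obtain ⟨h0, h1⟩ := hb z
    have := exp_neg_le_quadratic (mul_nonneg hlam h0)
    have h2 : u z ^ 2 ≤ u z := by nlinarith
    nlinarith [mul_le_mul_of_nonneg_left h2 (sq_nonneg lam)]
  have hei : Integrable (fun z => Real.exp (-(lam * u z))) p := by
    refine Integrable.of_mem_Icc 0 1 (by fun_prop) (ae_of_all _ fun z => ⟨(Real.exp_pos _).le, ?_⟩)
    rw [Real.exp_le_one_iff]
    have := mul_nonneg hlam (hb z).1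
    linarith
  have hmean : ∫ z, Real.exp (-(lam * u z)) ∂p ≤ 1 - lam * (1 - lam / 2) * L := by
    calc _ ≤ ∫ z, (1 - lam * (1 - lam / 2) * u z) ∂p :=
          integral_mono hei ((integrable_const _).sub (hui.const_mul _)) hexp
      _ = _ := by
          rw [integral_sub (integrable_const _) (hui.const_mul _), integral_const_mul]
          simp [L]
  calc _ = ∫ z, Real.exp (lam * (1 - lam / 2) * L) * Real.exp (-(lam * u z)) ∂p := by
        congr 1 with z
        rw [← Real.exp_add]
        ring_nf
    _ = Real.exp (lam * (1 - lam / 2) * L) * ∫ z, Real.exp (-(lam * u z)) ∂p :=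
        integral_const_mul _ _
    _ ≤ Real.exp (lam * (1 - lam / 2) * L) * Real.exp (-(lam * (1 - lam / 2) * L)) := by
        gcongr
        refine hmean.trans ?_
        have := Real.add_one_le_exp (-(lam * (1 - lam / 2) * L))
        linarith
    _ = 1 := by rw [← Real.exp_add]; simp

/-- Donsker–Varadhan inequality, obtained from the nonnegativity of the divergence of `Q` from the
tilted measure `P.tilted f`. -/
lemma integral_le_llr_add_log {W : Type*} [MeasurableSpace W] (P Q : Measure W)
    [IsProbabilityMeasure P] [IsProbabilityMeasure Q] (hQP : Q ≪ P)
    (hint : Integrable (llr Q P) Q) (f : W → ℝ) (hfQ : Integrable f Q)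
    (hfP : Integrable (fun w => Real.exp (f w)) P) :
    ∫ w, f w ∂Q ≤ ∫ w, llr Q P w ∂Q + Real.log (∫ w, Real.exp (f w) ∂P) := by
  have := isProbabilityMeasure_tilted hfP
  have h := InformationTheory.integral_llr_add_sub_measure_univ_nonneg
    (hQP.trans (absolutelyContinuous_tilted hfP)) (integrable_llr_tilted_right hQP hfQ hint hfP)
  rw [integral_llr_tilted_right hQP hfQ hfP hint] at h
  simp only [probReal_univ] at h
  linarith

/-- The scaled and bias-corrected generalization gap of the weight `w` on the dataset `D`; with
`lam = 1 / β` its exponential moment under the law of `D` is at most one. -/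
noncomputable def gap {Z W : Type*} [MeasurableSpace Z] (p : Measure Z) (N : ℕ)
    (ℓ : W × Z → ℝ) (lam : ℝ) (x : W × (Fin N → Z)) : ℝ :=
  ∑ i, lam * ((1 - lam / 2) * (∫ z, ℓ (x.1, z) ∂p) - ℓ (x.1, x.2 i))

section

variable {Z W : Type*} [MeasurableSpace Z] [MeasurableSpace W] (p : Measure Z)
  [IsProbabilityMeasure p] (N : ℕ) (ℓ : W × Z → ℝ) (lam : ℝ)

lemma measurable_risk (hℓ : Measurable ℓ) : Measurable fun w => ∫ z, ℓ (w, z) ∂p :=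
  hℓ.stronglyMeasurable.integral_prod_right'.measurable

lemma risk_mem (hℓ : Measurable ℓ) (hb : ∀ w z, ℓ (w, z) ∈ Set.Icc (0 : ℝ) 1) (w : W) :
    ∫ z, ℓ (w, z) ∂p ∈ Set.Icc (0 : ℝ) 1 := by
  refine ⟨integral_nonneg fun z => (hb w z).1, ?_⟩
  have hi : Integrable (fun z => ℓ (w, z)) p :=
    Integrable.of_mem_Icc 0 1 (by fun_prop) (ae_of_all _ (hb w))
  calc ∫ z, ℓ (w, z) ∂p ≤ ∫ _, (1 : ℝ) ∂p :=
        integral_mono hi (integrable_const _) fun z => (hb w z).2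
    _ = 1 := by simp

lemma measurable_gap (hℓ : Measurable ℓ) : Measurable (gap p N ℓ lam) := by
  have hr : Measurable fun x : W × (Fin N → Z) => ∫ z, ℓ (x.1, z) ∂p :=
    (measurable_risk p ℓ hℓ).comp measurable_fst
  unfold gap
  exact Finset.measurable_sum _ fun i _ => by fun_prop

lemma abs_gap_le (hℓ : Measurable ℓ) (hb : ∀ w z, ℓ (w, z) ∈ Set.Icc (0 : ℝ) 1)
    (x : W × (Fin N → Z)) :
    |gap p N ℓ lam x| ≤ N * (|lam| * (|1 - lam / 2| + 1)) := by
  unfold gap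
  refine (Finset.abs_sum_le_sum_abs _ _).trans ?_
  refine (Finset.sum_le_card_nsmul _ _ (|lam| * (|1 - lam / 2| + 1)) fun i _ => ?_).trans (by simp)
  rw [abs_mul]
  gcongr
  refine (abs_sub _ _).trans ?_
  have h1 := risk_mem p ℓ hℓ hb x.1
  have h2 := hb x.1 (x.2 i)
  rw [abs_mul, abs_of_nonneg h1.1, abs_of_nonneg h2.1]
  exact add_le_add (mul_le_of_le_one_right (abs_nonneg _) h1.2) h2.2

lemma integrable_exp_gap_comp (hℓ : Measurable ℓ) (hb : ∀ w z, ℓ (w, z) ∈ Set.Icc (0 : ℝ) 1)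
    {A : Type*} [MeasurableSpace A] (μ : Measure A) [IsFiniteMeasure μ]
    (g : A → W × (Fin N → Z)) (hg : Measurable g) :
    Integrable (fun a => Real.exp (gap p N ℓ lam (g a))) μ := by
  have := measurable_gap p N ℓ lam hℓ
  refine Integrable.of_mem_Icc 0 (Real.exp (N * (|lam| * (|1 - lam / 2| + 1)))) (by fun_prop)
    (ae_of_all _ fun a => ⟨(Real.exp_pos _).le, ?_⟩)
  gcongr
  exact (le_abs_self _).trans (abs_gap_le p N ℓ lam hℓ hb _)

lemma integrable_gap (hℓ : Measurable ℓ) (hb : ∀ w z, ℓ (w, z) ∈ Set.Icc (0 : ℝ) 1)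
    (Q : Measure W) [IsFiniteMeasure Q] (D : Fin N → Z) :
    Integrable (fun w => gap p N ℓ lam (w, D)) Q := by
  have := measurable_gap p N ℓ lam hℓ
  exact Integrable.of_mem_Icc _ _ (by fun_prop)
    (ae_of_all _ fun w => abs_le.1 (abs_gap_le p N ℓ lam hℓ hb _))

lemma integral_exp_gap_le_one (hℓ : Measurable ℓ) (hb : ∀ w z, ℓ (w, z) ∈ Set.Icc (0 : ℝ) 1)
    (hlam : 0 ≤ lam) (w : W) :
    ∫ D, Real.exp (gap p N ℓ lam (w, D)) ∂(Measure.pi fun _ : Fin N => p) ≤ 1 := by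
  simp only [gap, Real.exp_sum]
  rw [integral_fintype_prod_eq_prod
    (fun (_ : Fin N) z => Real.exp (lam * ((1 - lam / 2) * (∫ z', ℓ (w, z') ∂p) - ℓ (w, z))))]
  exact Finset.prod_le_one (fun i _ => integral_nonneg fun z => (Real.exp_pos _).le)
    fun i _ => integral_exp_term_le_one p (fun z => ℓ (w, z)) (by fun_prop) (hb w) lam hlam

/-- Markov's inequality for the prior average of `exp gap`, whose expectation over the dataset is
at most one by Fubini. -/
lemma one_sub_le_measure_good (hℓ : Measurable ℓ) (hb : ∀ w z, ℓ (w, z) ∈ Set.Icc (0 : ℝ) 1)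
    (hlam : 0 ≤ lam) (P : Measure W) [IsProbabilityMeasure P] (δ : ℝ) (hδ : 0 < δ) :
    ENNReal.ofReal (1 - δ) ≤ (Measure.pi fun _ : Fin N => p)
      {D | ∫ w, Real.exp (gap p N ℓ lam (w, D)) ∂P < 1 / δ} := by
  set μ := Measure.pi fun _ : Fin N => p
  have hprod : Integrable (fun x : (Fin N → Z) × W => Real.exp (gap p N ℓ lam (x.2, x.1)))
      (μ.prod P) :=
    integrable_exp_gap_comp p N ℓ lam hℓ hb (μ.prod P)
      (fun x : (Fin N → Z) × W => (x.2, x.1)) measurable_swap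
  have hmeasZ : Measurable fun D => ∫ w, Real.exp (gap p N ℓ lam (w, D)) ∂P := by
    have := measurable_gap p N ℓ lam hℓ
    have h : Measurable fun x : (Fin N → Z) × W => Real.exp (gap p N ℓ lam (x.2, x.1)) := by
      fun_prop
    exact h.stronglyMeasurable.integral_prod_right'.measurable
  have hexpect : ∫ D, ∫ w, Real.exp (gap p N ℓ lam (w, D)) ∂P ∂μ ≤ 1 := by
    rw [integral_integral_swap hprod]
    calc _ ≤ ∫ _, (1 : ℝ) ∂P :=
          integral_mono hprod.integral_prod_right (integrable_const _)
            fun w => integral_exp_gap_le_one p N ℓ lam hℓ hb hlam w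
      _ = 1 := by simp
  have hmarkov := mul_meas_ge_le_integral_of_nonneg (μ := μ)
    (f := fun D => ∫ w, Real.exp (gap p N ℓ lam (w, D)) ∂P)
    (ae_of_all _ fun D => integral_nonneg fun w => (Real.exp_pos _).le)
    hprod.integral_prod_left (1 / δ)
  set B := {D | 1 / δ ≤ ∫ w, Real.exp (gap p N ℓ lam (w, D)) ∂P}
  have hBm : MeasurableSet B := measurableSet_le measurable_const hmeasZ
  have hB : μ.real B ≤ δ := by
    have h := hmarkov.trans hexpect
    rw [one_div, inv_mul_le_iff₀ hδ, mul_one] at h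
    exact h
  have hset : {D | ∫ w, Real.exp (gap p N ℓ lam (w, D)) ∂P < 1 / δ} = Bᶜ := by
    ext D
    simp [B]
  rw [hset, ← ofReal_measureReal, probReal_compl_eq_one_sub hBm]
  exact ENNReal.ofReal_le_ofReal (by linarith)

end

end PacBayes

theorem pac_bayes_high_probability
    {X Y W : Type*} [MeasurableSpace X] [MeasurableSpace Y] [MeasurableSpace W]
    (p : Measure (X × Y)) [IsProbabilityMeasure p]
    (N : ℕ) (hN : 1 ≤ N)
    (ℓ : W × (X × Y) → ℝ) (hℓmeas : Measurable ℓ)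
    (hℓbound : ∀ w z, ℓ (w, z) ∈ Set.Icc (0 : ℝ) 1)
    (β : ℝ) (hβ : 1 / 2 < β)
    (δ : ℝ) (hδ : δ ∈ Set.Ioo (0 : ℝ) 1)
    (P : Measure W) [IsProbabilityMeasure P] :
    ENNReal.ofReal (1 - δ) ≤
      (Measure.pi fun _ : Fin N => p)
        {D : Fin N → X × Y | ∀ Q : Measure W, IsProbabilityMeasure Q →
          ENNReal.ofReal (∫ w, ∫ z, ℓ (w, z) ∂p ∂Q) ≤
            ENNReal.ofReal (1 - 1 / (2 * β))⁻¹ *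
              (ENNReal.ofReal (∫ w, (1 / (N : ℝ)) * ∑ i : Fin N, ℓ (w, D i) ∂Q) +
                ENNReal.ofReal (β / (N : ℝ)) *
                  (klDiv Q P + ENNReal.ofReal (Real.log (1 / δ))))} := by
  have hβ0 : 0 < β := by linarith
  have hN0 : (0 : ℝ) < N := by exact_mod_cast hN
  have hc : 0 < 1 - 1 / (2 * β) := by
    rw [sub_pos, div_lt_one (by linarith)]
    linarith
  refine (PacBayes.one_sub_le_measure_good p N ℓ (1 / β) hℓmeas hℓbound (by positivity) P δ
    hδ.1).trans (measure_mono fun D hD Q hQ => ?_)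
  by_cases hkl : Q ≪ P ∧ Integrable (llr Q P) Q
  swap
  -- Infinite divergence: both coefficients are positive, so the right-hand side is `⊤`.
  · have hc' : ENNReal.ofReal (1 - 1 / (2 * β))⁻¹ ≠ 0 := by
      simpa using hc
    have hβN : ENNReal.ofReal (β / N) ≠ 0 := by
      rw [ne_eq, ENNReal.ofReal_eq_zero, not_le]
      positivity
    have htop : klDiv Q P = ⊤ := if_neg hkl
    rw [htop, top_add, ENNReal.mul_top hβN, add_top, ENNReal.mul_top hc']
    exact le_top
  have hklv : klDiv Q P = ENNReal.ofReal (∫ w, llr Q P w ∂Q) := if_pos hkl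
  have hD' : ∫ w, Real.exp (PacBayes.gap p N ℓ (1 / β) (w, D)) ∂P < 1 / δ := hD
  have hexpi : Integrable (fun w => Real.exp (PacBayes.gap p N ℓ (1 / β) (w, D))) P :=
    PacBayes.integrable_exp_gap_comp p N ℓ (1 / β) hℓmeas hℓbound P (fun w => (w, D))
      (by fun_prop)
  have hdv := PacBayes.integral_le_llr_add_log P Q hkl.1 hkl.2 _
    (PacBayes.integrable_gap p N ℓ (1 / β) hℓmeas hℓbound Q D) hexpi
  have hlog : Real.log (∫ w, Real.exp (PacBayes.gap p N ℓ (1 / β) (w, D)) ∂P)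
      ≤ Real.log (1 / δ) := Real.log_le_log (integral_exp_pos hexpi) hD'.le
  have hklnn : 0 ≤ ∫ w, llr Q P w ∂Q := by
    have h := InformationTheory.integral_llr_add_sub_measure_univ_nonneg hkl.1 hkl.2
    simpa using h
  have hlognn : 0 ≤ Real.log (1 / δ) :=
    Real.log_nonneg (by rw [le_div_iff₀ hδ.1]; linarith [hδ.2])
  have hempnn : 0 ≤ ∫ w, (1 / (N : ℝ)) * ∑ i : Fin N, ℓ (w, D i) ∂Q :=
    integral_nonneg fun w => mul_nonneg (by positivity)
      (Finset.sum_nonneg fun i _ => (hℓbound w (D i)).1)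
  have hri : Integrable (fun w => ∫ z, ℓ (w, z) ∂p) Q :=
    Integrable.of_mem_Icc 0 1 (PacBayes.measurable_risk p ℓ hℓmeas).aemeasurable
      (ae_of_all _ (PacBayes.risk_mem p ℓ hℓmeas hℓbound))
  have hli : Integrable (fun w => (1 / (N : ℝ)) * ∑ i : Fin N, ℓ (w, D i)) Q :=
    (integrable_finsetSum _ fun i _ => Integrable.of_mem_Icc 0 1 (by fun_prop)
      (ae_of_all _ fun w => hℓbound w (D i))).const_mul _
  have hgap : ∫ w, PacBayes.gap p N ℓ (1 / β) (w, D) ∂Q =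
      N / β * ((1 - 1 / (2 * β)) * (∫ w, ∫ z, ℓ (w, z) ∂p ∂Q) -
        ∫ w, (1 / (N : ℝ)) * ∑ i : Fin N, ℓ (w, D i) ∂Q) := by
    rw [← integral_const_mul, ← integral_sub (hri.const_mul _) hli, ← integral_const_mul]
    congr 1 with w
    simp only [PacBayes.gap, ← Finset.mul_sum, Finset.sum_sub_distrib, Finset.sum_const,
      Finset.card_univ, Fintype.card_fin, nsmul_eq_mul]
    field_simp
  rw [hgap] at hdv
  rw [hklv, ← ENNReal.ofReal_add hklnn hlognn, ← ENNReal.ofReal_mul (by positivity),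
    ← ENNReal.ofReal_add hempnn (mul_nonneg (by positivity) (add_nonneg hklnn hlognn)),
    ← ENNReal.ofReal_mul (inv_nonneg.2 hc.le)]
  refine ENNReal.ofReal_le_ofReal ?_
  rw [le_inv_mul_iff₀ hc, ← sub_le_iff_le_add']
  have h := mul_le_mul_of_nonneg_left (hdv.trans (add_le_add_right hlog _))
    (by positivity : 0 ≤ β / N)
  rwa [← mul_assoc, div_mul_div_cancel₀ hN0.ne', div_self hβ0.ne', one_mul] at h
end

section
/- Fix a probability measure p on a sample space X × Y, an integer N ≥ 1, a measurable loss ℓ : W × (X × Y) → [0,1] on a measurable weight space W, a real number β > 1/2, a probability measure P on W, and a Markov kernel assigning to each dataset D ∈ (X × Y)^N a probability measure Q_D on W. Write L_D(Q) = E_{w∼Q}[(1/N) Σ_{i=1}^N ℓ(w,(x_i,y_i))] and L_test(Q) = E_{w∼Q} E_{(x,y)∼p}[ℓ(w,(x,y))]. Then, taking expectations over D ∼ p^{⊗N}: E_D[L_test(Q_D)] ≤ (1 − 1/(2β))^{-1} [ E_D[L_D(Q_D)] + (β/N) E_D[KL(Q_D‖P)] ]. -/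
/-!
Put `λ = 1/β`, let `L w` be the test loss of `w`, and consider the exponent
`F (D, w) = ∑ i, λ * ((1 - λ/2) * L w - ℓ (w, D i))`.

For fixed `w`, the elementary bound `exp (-x) ≤ 1 - x + x²/2` (`x ≥ 0`) and `ℓ² ≤ ℓ` give
`E exp (-λ ℓ) ≤ 1 - λ (1 - λ/2) L w ≤ exp (-λ (1 - λ/2) L w)`, so by independence
`E_D exp (F (D, w)) ≤ 1` (`expMoment_le_one`). For fixed `D`, the Donsker–Varadhan inequality
together with `log t ≤ t - 1` gives `∫ F dQ_D - ∫ exp F dP + 1 ≤ KL(Q_D‖P)`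
(`gibbs_le_klDiv`). Integrating over `D`, the exponential term is at most `1` after exchanging
the order of integration, whence `E_D ∫ F dQ_D ≤ E_D KL(Q_D‖P)`. Since
`F = (N/β) * ((1 - 1/(2β)) * L w - L_D w)`, this is the claim up to rearrangement.

No measurability of `D ↦ KL(Q_D‖P)` is needed: it is only bounded below by a measurable function.
-/

open MeasureTheory ENNReal ProbabilityTheory

lemma exp_neg_le_quadratic {x : ℝ} (hx : 0 ≤ x) : Real.exp (-x) ≤ 1 - x + x ^ 2 / 2 := by
  have h := Real.quadratic_le_exp_of_nonneg hx
  have hq : 0 < 1 - x + x ^ 2 / 2 := by nlinarith [sq_nonneg (x - 1)]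
  rw [Real.exp_neg, inv_le_iff_one_le_mul₀ (Real.exp_pos x)]
  -- `(1 - x + x²/2) * (1 + x + x²/2) = 1 + x⁴/4`
  nlinarith [mul_le_mul_of_nonneg_left h hq.le, sq_nonneg (x ^ 2)]

lemma ofReal_integral_le_lintegral {Ω : Type*} [MeasurableSpace Ω] {μ : Measure Ω} {g : Ω → ℝ}
    (hg : Integrable g μ) : ENNReal.ofReal (∫ x, g x ∂μ) ≤ ∫⁻ x, ENNReal.ofReal (g x) ∂μ := by
  rw [integral_eq_lintegral_pos_part_sub_lintegral_neg_part hg]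
  exact (ENNReal.ofReal_le_ofReal (sub_le_self _ ENNReal.toReal_nonneg)).trans
    ENNReal.ofReal_toReal_le

/-- The Donsker–Varadhan inequality, weakened by `log t ≤ t - 1`. The proof is Gibbs' inequality
for `Q` against the tilted measure `P.tilted f`. -/
lemma gibbs_le_klDiv {W : Type*} [MeasurableSpace W] (Q P : Measure W) [IsProbabilityMeasure Q]
    [IsProbabilityMeasure P] {f : W → ℝ} (hfQ : Integrable f Q)
    (hfP : Integrable (fun w => Real.exp (f w)) P) :
    ENNReal.ofReal (∫ w, f w ∂Q - ∫ w, Real.exp (f w) ∂P + 1) ≤ klDiv Q P := by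
  unfold klDiv
  split_ifs with h
  · obtain ⟨hac, hint⟩ := h
    refine ENNReal.ofReal_le_ofReal ?_
    have := isProbabilityMeasure_tilted hfP
    have h1 := InformationTheory.integral_llr_add_sub_measure_univ_nonneg
      (hac.trans (absolutelyContinuous_tilted hfP))
      (integrable_llr_tilted_right hac hfQ hint hfP)
    rw [integral_llr_tilted_right hac hfQ hfP hint] at h1
    simp only [probReal_univ] at h1
    have h2 := Real.log_le_sub_one_of_pos (integral_exp_pos hfP)
    linarith
  · exact le_top

/-- One-sample exponential moment bound for a `[0,1]`-valued loss. -/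
lemma single_expMoment_le_one {Z : Type*} [MeasurableSpace Z] (p : Measure Z)
    [IsProbabilityMeasure p] {g : Z → ℝ} (hg : Measurable g) (hb : ∀ z, g z ∈ Set.Icc (0 : ℝ) 1)
    {t : ℝ} (ht : 0 ≤ t) :
    ∫ z, Real.exp (t * ((1 - t / 2) * ∫ z', g z' ∂p - g z)) ∂p ≤ 1 := by
  have hgi : Integrable g p := Integrable.of_mem_Icc 0 1 hg.aemeasurable (ae_of_all _ hb)
  set m := ∫ z', g z' ∂p with hm
  have hpt : ∀ z, Real.exp (t * ((1 - t / 2) * m - g z)) ≤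
      Real.exp (t * (1 - t / 2) * m) * (1 - t * (1 - t / 2) * g z) := fun z => by
    rw [show t * ((1 - t / 2) * m - g z) = t * (1 - t / 2) * m + -(t * g z) by ring, Real.exp_add]
    refine mul_le_mul_of_nonneg_left ?_ (Real.exp_pos _).le
    refine (exp_neg_le_quadratic (mul_nonneg ht (hb z).1)).trans ?_
    nlinarith [mul_nonneg (sq_nonneg t) (mul_nonneg (hb z).1 (sub_nonneg.2 (hb z).2))]
  have hint : Integrable
      (fun z => Real.exp (t * (1 - t / 2) * m) * (1 - t * (1 - t / 2) * g z)) p :=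
    ((integrable_const _).sub (hgi.const_mul _)).const_mul _
  calc ∫ z, Real.exp (t * ((1 - t / 2) * m - g z)) ∂p
      ≤ ∫ z, Real.exp (t * (1 - t / 2) * m) * (1 - t * (1 - t / 2) * g z) ∂p :=
        integral_mono_of_nonneg (ae_of_all _ fun _ => (Real.exp_pos _).le) hint
          (ae_of_all _ hpt)
    _ = Real.exp (t * (1 - t / 2) * m) * (1 - t * (1 - t / 2) * m) := by
        rw [integral_const_mul, integral_sub (integrable_const _) (hgi.const_mul _),
          integral_const_mul]
        simp [hm]
    _ ≤ Real.exp (t * (1 - t / 2) * m) * Real.exp (-(t * (1 - t / 2) * m)) :=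
        mul_le_mul_of_nonneg_left (Real.one_sub_le_exp_neg _) (Real.exp_pos _).le
    _ = 1 := by rw [← Real.exp_add]; simp

lemma expMoment_le_one {Z : Type*} [MeasurableSpace Z] (p : Measure Z)
    [IsProbabilityMeasure p] (N : ℕ) {g : Z → ℝ} (hg : Measurable g)
    (hb : ∀ z, g z ∈ Set.Icc (0 : ℝ) 1) {t : ℝ} (ht : 0 ≤ t) :
    ∫ D : Fin N → Z, Real.exp (∑ i, t * ((1 - t / 2) * ∫ z', g z' ∂p - g (D i)))
      ∂(Measure.pi fun _ => p) ≤ 1 := by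
  simp_rw [Real.exp_sum]
  rw [integral_fintype_prod_eq_pow
    (fun z => Real.exp (t * ((1 - t / 2) * ∫ z', g z' ∂p - g z)))]
  exact pow_le_one₀ (integral_nonneg fun _ => (Real.exp_pos _).le)
    (single_expMoment_le_one p hg hb ht)

theorem pac_bayes_in_expectation
    {X Y W : Type*} [MeasurableSpace X] [MeasurableSpace Y] [MeasurableSpace W]
    (p : Measure (X × Y)) [IsProbabilityMeasure p]
    (N : ℕ) (hN : 1 ≤ N)
    (ℓ : W × (X × Y) → ℝ) (hℓmeas : Measurable ℓ)
    (hℓbound : ∀ w z, ℓ (w, z) ∈ Set.Icc (0 : ℝ) 1)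
    (β : ℝ) (hβ : 1 / 2 < β)
    (P : Measure W) [IsProbabilityMeasure P]
    (Q : Kernel (Fin N → X × Y) W) [IsMarkovKernel Q] :
    ENNReal.ofReal
        (∫ D, ∫ w, ∫ z, ℓ (w, z) ∂p ∂(Q D) ∂(Measure.pi fun _ : Fin N => p)) ≤
      ENNReal.ofReal (1 - 1 / (2 * β))⁻¹ *
        (ENNReal.ofReal
            (∫ D, ∫ w, (1 / (N : ℝ)) * ∑ i : Fin N, ℓ (w, D i) ∂(Q D)
              ∂(Measure.pi fun _ : Fin N => p)) +
          ENNReal.ofReal (β / (N : ℝ)) *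
            ∫⁻ D, klDiv (Q D) P ∂(Measure.pi fun _ : Fin N => p)) := by
  have hβ0 : 0 < β := by linarith
  have hN0 : (0 : ℝ) < N := by exact_mod_cast hN
  have hc : 0 < 1 - 1 / (2 * β) := by
    rw [sub_pos, div_lt_one (by linarith)]; linarith
  set μ := Measure.pi fun _ : Fin N => p with hμ
  set L : W → ℝ := fun w => ∫ z, ℓ (w, z) ∂p with hL
  have hLm : Measurable L := hℓmeas.stronglyMeasurable.integral_prod_right'.measurable
  have hsec : ∀ w, Measurable fun z => ℓ (w, z) := fun w => hℓmeas.comp measurable_prodMk_left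
  have hLb : ∀ w, L w ∈ Set.Icc (0 : ℝ) 1 := fun w => by
    refine ⟨integral_nonneg fun z => (hℓbound w z).1, ?_⟩
    have := integral_mono (μ := p) (Integrable.of_mem_Icc 0 1 (hsec w).aemeasurable
      (ae_of_all _ (hℓbound w))) (integrable_const (1 : ℝ)) fun z => (hℓbound w z).2
    simpa using this
  set E : (Fin N → X × Y) × W → ℝ := fun x => (1 / (N : ℝ)) * ∑ i : Fin N, ℓ (x.2, x.1 i) with hE
  have hEm : Measurable E := by
    refine Measurable.const_mul (Finset.measurable_sum _ fun i _ => hℓmeas.comp ?_) _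
    exact measurable_snd.prodMk ((measurable_pi_apply i).comp measurable_fst)
  have hEb : ∀ x, E x ∈ Set.Icc (0 : ℝ) 1 := fun x => by
    refine ⟨mul_nonneg (by positivity) (Finset.sum_nonneg fun i _ => (hℓbound _ _).1), ?_⟩
    have : ∑ i : Fin N, ℓ (x.2, x.1 i) ≤ ∑ i : Fin N, (1 : ℝ) :=
      Finset.sum_le_sum fun i _ => (hℓbound _ _).2
    simp only [Finset.sum_const, Finset.card_univ, Fintype.card_fin, nsmul_eq_mul, mul_one] at this
    simp only [hE, one_div]
    rw [inv_mul_le_iff₀ hN0]; linarith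
  set F : (Fin N → X × Y) × W → ℝ :=
    fun x => (N / β) * ((1 - 1 / (2 * β)) * L x.2 - E x) with hF
  have hFm : Measurable F := by fun_prop
  have hFsum : ∀ D w, F (D, w) =
      ∑ i, (1 / β) * ((1 - 1 / β / 2) * ∫ z, ℓ (w, z) ∂p - ℓ (w, D i)) := fun D w => by
    rw [← Finset.mul_sum, Finset.sum_sub_distrib]
    simp only [hF, hE, Finset.sum_const, Finset.card_univ, Fintype.card_fin, nsmul_eq_mul]
    change _ = 1 / β * (N * ((1 - 1 / β / 2) * L w) - _)
    field_simp
  have hFb : ∀ x, F x ∈ Set.Icc (-(N / β)) (N / β) := fun x => by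
    have h1 := hEb x
    have h2 := hLb x.2
    have h3 : 0 < 1 / (2 * β) := by positivity
    have h4 : 0 < N / β := by positivity
    have h5 : (1 - 1 / (2 * β)) * L x.2 ≤ 1 := by nlinarith [h2.1, h2.2]
    have h6 : 0 ≤ (1 - 1 / (2 * β)) * L x.2 := mul_nonneg hc.le h2.1
    constructor <;> simp only [hF] <;> nlinarith [h1.1, h1.2]
  have hFi : ∀ (ν : Measure ((Fin N → X × Y) × W)) [IsProbabilityMeasure ν], Integrable F ν :=
    fun ν _ => Integrable.of_mem_Icc _ _ hFm.aemeasurable (ae_of_all _ hFb)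
  have hexpb : ∀ x, Real.exp (F x) ∈ Set.Icc 0 (Real.exp (N / β)) := fun x =>
    ⟨(Real.exp_pos _).le, Real.exp_le_exp.2 (hFb x).2⟩
  have hexpi : Integrable (fun x => Real.exp (F x)) (μ.prod P) :=
    Integrable.of_mem_Icc _ _ hFm.exp.aemeasurable (ae_of_all _ hexpb)
  -- the function of `D` that bounds the divergence from below
  have hG1 : Integrable (fun D => ∫ w, F (D, w) ∂(Q D)) μ := (hFi (μ ⊗ₘ Q)).integral_compProd
  have hG2 : Integrable (fun D => ∫ w, Real.exp (F (D, w)) ∂P) μ := hexpi.integral_prod_left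
  have hmom : ∫ D, ∫ w, Real.exp (F (D, w)) ∂P ∂μ ≤ 1 := by
    rw [integral_integral_swap hexpi]
    have h : ∀ w, ∫ D, Real.exp (F (D, w)) ∂μ ≤ 1 := fun w => by
      simp_rw [hFsum]
      exact expMoment_le_one p N (hsec w) (hℓbound w) (by positivity)
    have := integral_mono (μ := P) hexpi.integral_prod_right (integrable_const (1 : ℝ)) h
    simpa using this
  have hkey : ENNReal.ofReal (∫ D, ∫ w, F (D, w) ∂(Q D) ∂μ) ≤ ∫⁻ D, klDiv (Q D) P ∂μ := by
    calc ENNReal.ofReal (∫ D, ∫ w, F (D, w) ∂(Q D) ∂μ)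
        ≤ ENNReal.ofReal (∫ D, (∫ w, F (D, w) ∂(Q D) - ∫ w, Real.exp (F (D, w)) ∂P + 1) ∂μ) := by
          refine ENNReal.ofReal_le_ofReal ?_
          rw [integral_add (by exact hG1.sub hG2) (integrable_const _), integral_sub hG1 hG2]
          simp only [integral_const, probReal_univ, smul_eq_mul, mul_one]
          linarith
      _ ≤ ∫⁻ D, ENNReal.ofReal (∫ w, F (D, w) ∂(Q D) - ∫ w, Real.exp (F (D, w)) ∂P + 1) ∂μ :=
          ofReal_integral_le_lintegral ((hG1.sub hG2).add (integrable_const _))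
      _ ≤ ∫⁻ D, klDiv (Q D) P ∂μ := by
          refine lintegral_mono fun D => gibbs_le_klDiv _ _ ?_ ?_
          · exact Integrable.of_mem_Icc _ _ (hFm.comp measurable_prodMk_left).aemeasurable
              (ae_of_all _ fun w => hFb (D, w))
          · exact Integrable.of_mem_Icc _ _ (hFm.comp measurable_prodMk_left).exp.aemeasurable
              (ae_of_all _ fun w => hexpb (D, w))
  have hLi : Integrable (fun x : (Fin N → X × Y) × W => L x.2) (μ ⊗ₘ Q) :=
    Integrable.of_mem_Icc 0 1 (hLm.comp measurable_snd).aemeasurable (ae_of_all _ fun x => hLb x.2)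
  have hEi : Integrable E (μ ⊗ₘ Q) :=
    Integrable.of_mem_Icc 0 1 hEm.aemeasurable (ae_of_all _ hEb)
  have hlin : ∫ D, ∫ w, F (D, w) ∂(Q D) ∂μ = (N / β) * ((1 - 1 / (2 * β)) *
      ∫ D, ∫ w, L w ∂(Q D) ∂μ - ∫ D, ∫ w, E (D, w) ∂(Q D) ∂μ) := by
    rw [← Measure.integral_compProd (hFi _), ← Measure.integral_compProd hEi,
      ← Measure.integral_compProd hLi, integral_const_mul,
      integral_sub (hLi.const_mul _) hEi, integral_const_mul]
  change ENNReal.ofReal (∫ D, ∫ w, L w ∂(Q D) ∂μ) ≤ _ *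
    (ENNReal.ofReal (∫ D, ∫ w, E (D, w) ∂(Q D) ∂μ) + _)
  rw [hlin] at hkey
  set A := ∫ D, ∫ w, L w ∂(Q D) ∂μ
  set B := ∫ D, ∫ w, E (D, w) ∂(Q D) ∂μ
  calc ENNReal.ofReal A
      = ENNReal.ofReal ((1 - 1 / (2 * β))⁻¹ *
          (B + β / N * (N / β * ((1 - 1 / (2 * β)) * A - B)))) := by
        congr 1
        rw [← mul_assoc, div_mul_div_cancel₀ hN0.ne', div_self hβ0.ne', one_mul,
          add_sub_cancel, inv_mul_cancel_left₀ hc.ne']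
    _ ≤ ENNReal.ofReal (1 - 1 / (2 * β))⁻¹ * (ENNReal.ofReal B + ENNReal.ofReal (β / N) *
          ENNReal.ofReal (N / β * ((1 - 1 / (2 * β)) * A - B))) := by
        rw [ENNReal.ofReal_mul (inv_nonneg.2 hc.le),
          ← ENNReal.ofReal_mul (p := β / N) (by positivity)]
        gcongr
        exact ENNReal.ofReal_add_le
    _ ≤ _ := by gcongr
end

section
/- Let π be a probability measure on a measurable space of datasets, let D ↦ Q(·|D) be a Markov kernel into a measurable weight space W, and let Q̄ = ∫ Q(·|D) dπ(D) be the marginal distribution of the weights. Then for every probability measure P on W such that Q̄ is absolutely continuous with respect to P: E_{D∼π}[ KL(Q(·|D)‖P) ] = E_{D∼π}[ KL(Q(·|D)‖Q̄) ] + KL(Q̄‖P). -/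
/-!
Write `Q̄` for the marginal and `g = log (dQ̄/dP)`. No assumption makes `D ↦ KL(Q_D‖P)` measurable,
so `∫⁻` is only a lower integral there: it is monotone, and additive when one summand is measurable.

* If `KL(Q̄‖P) < ∞`, then `g` is `Q̄`-integrable, hence `Q_D`-integrable for almost every `D`, and
  `Q̄ {dQ̄/dP = 0} = 0` gives `Q_D ≪ P ↔ Q_D ≪ Q̄` for almost every `D`. The chain rule
  for densities then yields `KL(Q_D‖P) = KL(Q_D‖Q̄) + G D` with `G D = ∫ g dQ_D`
  (`klDiv_add_ofReal_eq`), and `G` is measurable up to null sets and integrable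
  with `∫ G dπ = KL(Q̄‖P)`.
* If `KL(Q̄‖P) = ∞`, Young's inequality for `x log x` gives the variational bound
  `∫ g⁺ dQ_D ≤ KL(Q_D‖P) + 1` (`lintegral_llr_le`), whose left side is measurable in `D` and
  integrates to `∫ g⁺ dQ̄ = ∞` (`klDiv_le_lintegral_llr`), so the left side of the identity is `∞`.
-/

open MeasureTheory ENNReal ProbabilityTheory

/-- For probability measures the correction `ν univ - μ univ` in Mathlib's divergence vanishes. -/
lemma klDiv_eq_mathlib {W : Type*} [MeasurableSpace W] (μ ν : Measure W)
    [IsProbabilityMeasure μ] [IsProbabilityMeasure ν] :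
    klDiv μ ν = InformationTheory.klDiv μ ν := by
  rw [klDiv, InformationTheory.klDiv_def]
  simp

lemma mul_log_le_klFun_add {x r : ℝ} (hx : 0 ≤ x) (hr : 0 ≤ r) :
    x * Real.log r ≤ InformationTheory.klFun x + r := by
  rcases hx.eq_or_lt with rfl | hx
  · simp [InformationTheory.klFun_zero]; positivity
  rcases hr.eq_or_lt with rfl | hr
  · simpa using InformationTheory.klFun_nonneg hx.le
  have h := Real.log_le_sub_one_of_pos (div_pos hr hx)
  rw [Real.log_div hr.ne' hx.ne'] at h
  have h2 := mul_le_mul_of_nonneg_left h hx.le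
  have h3 : x * (r / x - 1) = r - x := by field_simp
  rw [InformationTheory.klFun_apply]
  linarith

/-- Variational lower bound for the divergence, tested against the positive part of
`log (dρ/dP)` (`ENNReal.ofReal` discards the negative part). -/
lemma lintegral_llr_le {W : Type*} [MeasurableSpace W] (μ ρ P : Measure W)
    [IsProbabilityMeasure μ] [IsProbabilityMeasure ρ] [IsProbabilityMeasure P] :
    ∫⁻ w, ENNReal.ofReal (llr ρ P w) ∂μ ≤ klDiv μ P + 1 := by
  by_cases hμ : μ ≪ P
  swap
  · simp [klDiv, hμ]
  rw [klDiv_eq_mathlib, InformationTheory.klDiv_eq_lintegral_klFun_of_ac hμ,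
    ← lintegral_rnDeriv_mul hμ (measurable_llr ρ P).ennreal_ofReal.aemeasurable]
  calc ∫⁻ w, μ.rnDeriv P w * ENNReal.ofReal (llr ρ P w) ∂P
      ≤ ∫⁻ w, ENNReal.ofReal (InformationTheory.klFun (μ.rnDeriv P w).toReal)
          + ρ.rnDeriv P w ∂P := by
        refine lintegral_mono_ae ?_
        filter_upwards [μ.rnDeriv_ne_top P, ρ.rnDeriv_ne_top P] with w h1 h2
        rw [← ENNReal.ofReal_toReal h1, ← ENNReal.ofReal_toReal h2,
          ENNReal.toReal_ofReal ENNReal.toReal_nonneg,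
          ← ENNReal.ofReal_mul ENNReal.toReal_nonneg,
          ← ENNReal.ofReal_add (InformationTheory.klFun_nonneg ENNReal.toReal_nonneg)
            ENNReal.toReal_nonneg]
        exact ENNReal.ofReal_le_ofReal
          (mul_log_le_klFun_add ENNReal.toReal_nonneg ENNReal.toReal_nonneg)
    _ = ∫⁻ w, ENNReal.ofReal (InformationTheory.klFun (μ.rnDeriv P w).toReal) ∂P
          + ∫⁻ w, ρ.rnDeriv P w ∂P := lintegral_add_right _ (Measure.measurable_rnDeriv _ _)
    _ ≤ _ := by
        gcongr
        exact (Measure.lintegral_rnDeriv_le).trans (by simp)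

/-- The negative part of `log (dμ/dP)` contributes only a bounded amount, so an infinite
divergence forces the positive part to have infinite integral. -/
lemma klDiv_le_lintegral_llr {W : Type*} [MeasurableSpace W] (μ P : Measure W)
    [IsProbabilityMeasure μ] [IsProbabilityMeasure P] (hμ : μ ≪ P) :
    klDiv μ P ≤ ∫⁻ w, ENNReal.ofReal (llr μ P w) ∂μ + 1 := by
  rw [klDiv_eq_mathlib, InformationTheory.klDiv_eq_lintegral_klFun_of_ac hμ,
    ← lintegral_rnDeriv_mul hμ (measurable_llr μ P).ennreal_ofReal.aemeasurable]
  calc ∫⁻ w, ENNReal.ofReal (InformationTheory.klFun (μ.rnDeriv P w).toReal) ∂P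
      ≤ ∫⁻ w, μ.rnDeriv P w * ENNReal.ofReal (llr μ P w) + 1 ∂P := by
        refine lintegral_mono_ae ?_
        filter_upwards [μ.rnDeriv_ne_top P] with w h1
        nth_rw 2 [← ENNReal.ofReal_toReal h1]
        rw [← ENNReal.ofReal_mul ENNReal.toReal_nonneg, ← ENNReal.ofReal_one]
        refine le_trans (ENNReal.ofReal_le_ofReal ?_) ENNReal.ofReal_add_le
        have := ENNReal.toReal_nonneg (a := μ.rnDeriv P w)
        rw [InformationTheory.klFun_apply, llr_def]
        linarith
    _ = _ := by
        rw [lintegral_add_right _ measurable_const]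
        simp

/-- Change of reference measure in the divergence. Both sides may be infinite; the real number
`G = ∫ log (dρ/dP) dμ` is split into its positive and negative parts to stay in `ℝ≥0∞`. -/
lemma klDiv_add_ofReal_eq {W : Type*} [MeasurableSpace W] (μ ρ P : Measure W)
    [IsProbabilityMeasure μ] [IsProbabilityMeasure ρ] [IsProbabilityMeasure P] (hρ : ρ ≪ P)
    (hpos : ∀ᵐ w ∂μ, 0 < ρ.rnDeriv P w) (hint : Integrable (llr ρ P) μ) :
    klDiv μ P + ENNReal.ofReal (-∫ w, llr ρ P w ∂μ) =
      klDiv μ ρ + ENNReal.ofReal (∫ w, llr ρ P w ∂μ) := by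
  by_cases hμρ : μ ≪ ρ
  swap
  · have hμP : ¬ μ ≪ P := by
      intro h
      refine hμρ (Measure.AbsolutelyContinuous.mk fun s hs h0 ↦ ?_)
      -- a `ρ`-null set is `P`-null where `dρ/dP > 0`, and `μ` lives there
      rw [← Measure.withDensity_rnDeriv_eq ρ P hρ, withDensity_apply _ hs,
        lintegral_eq_zero_iff (Measure.measurable_rnDeriv _ _)] at h0
      have h1 : ∀ᵐ w ∂μ, w ∈ s → ρ.rnDeriv P w = 0 :=
        h.ae_le ((ae_restrict_iff' hs).mp h0)
      have h2 : ∀ᵐ w ∂μ, w ∉ s := by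
        filter_upwards [h1, hpos] with w hw hw' hws using hw'.ne' (hw hws)
      simpa [ae_iff] using h2
    simp [klDiv, hμρ, hμP]
  have hμP := hμρ.trans hρ
  have hllr : llr μ P =ᵐ[μ] fun w ↦ llr μ ρ w + llr ρ P w := by
    filter_upwards [hμP.ae_le (Measure.rnDeriv_mul_rnDeriv (κ := P) hμρ), hpos,
      Measure.rnDeriv_pos hμρ, hμP.ae_le (ρ.rnDeriv_ne_top P),
      hμρ.ae_le (μ.rnDeriv_ne_top ρ)] with w h1 h2 h3 h4 h5
    simp only [llr_def]
    rw [← h1, Pi.mul_apply, ENNReal.toReal_mul,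
      Real.log_mul (ENNReal.toReal_pos h3.ne' h5).ne' (ENNReal.toReal_pos h2.ne' h4).ne']
  have hiff : Integrable (llr μ P) μ ↔ Integrable (llr μ ρ) μ := by
    rw [integrable_congr hllr]
    exact integrable_add_iff_integrable_left hint
  by_cases hi : Integrable (llr μ ρ) μ
  swap
  · simp [klDiv, hi, hiff]
  have hi' := hiff.mpr hi
  have e : ∫ w, llr μ P w ∂μ = ∫ w, llr μ ρ w ∂μ + ∫ w, llr ρ P w ∂μ := by
    rw [integral_congr_ae hllr, integral_add hi hint]
  have n1 : 0 ≤ ∫ w, llr μ P w ∂μ := by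
    simpa using InformationTheory.integral_llr_add_sub_measure_univ_nonneg hμP hi'
  have n2 : 0 ≤ ∫ w, llr μ ρ w ∂μ := by
    simpa using InformationTheory.integral_llr_add_sub_measure_univ_nonneg hμρ hi
  rw [klDiv, klDiv, if_pos ⟨hμP, hi'⟩, if_pos ⟨hμρ, hi⟩]
  rcases le_total 0 (∫ w, llr ρ P w ∂μ) with h | h
  · rw [ENNReal.ofReal_of_nonpos (neg_nonpos.mpr h), add_zero, e, ENNReal.ofReal_add n2 h]
  · rw [ENNReal.ofReal_of_nonpos h, add_zero, ← ENNReal.ofReal_add n1 (neg_nonneg.mpr h), e]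
    congr 1
    ring

theorem expected_kl_decomposition
    {T W : Type*} [MeasurableSpace T] [MeasurableSpace W]
    (π : Measure T) [IsProbabilityMeasure π]
    (Q : Kernel T W) [IsMarkovKernel Q]
    (P : Measure W) [IsProbabilityMeasure P]
    (hac : π.bind (fun D => Q D) ≪ P) :
    ∫⁻ D, klDiv (Q D) P ∂π =
      (∫⁻ D, klDiv (Q D) (π.bind fun D' => Q D') ∂π) +
        klDiv (π.bind fun D' => Q D') P := by
  have hm : Measure.bind π (fun D => Q D) = Q ∘ₘ π := rfl
  rw [hm] at hac ⊢
  set m : Measure W := Q ∘ₘ π with hm_def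
  by_cases hint : Integrable (llr m P) m
  swap
  · have htop : klDiv m P = ⊤ := by simp [klDiv, hint]
    have h1 := klDiv_le_lintegral_llr m P hac
    have h2 : ∫⁻ w, ENNReal.ofReal (llr m P w) ∂m ≤ ∫⁻ D, klDiv (Q D) P ∂π + 1 := by
      calc ∫⁻ w, ENNReal.ofReal (llr m P w) ∂m
          = ∫⁻ D, ∫⁻ w, ENNReal.ofReal (llr m P w) ∂(Q D) ∂π :=
            Measure.lintegral_bind Q.measurable.aemeasurable
              (measurable_llr m P).ennreal_ofReal.aemeasurable
        _ ≤ ∫⁻ D, klDiv (Q D) P + 1 ∂π := lintegral_mono fun D ↦ lintegral_llr_le (Q D) m P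
        _ = _ := by
            rw [lintegral_add_right _ measurable_const]
            simp
    rw [htop, add_top]
    rw [htop, top_le_iff, ENNReal.add_eq_top, or_iff_left ENNReal.one_ne_top] at h1
    rw [h1, top_le_iff, ENNReal.add_eq_top, or_iff_left ENNReal.one_ne_top] at h2
    exact h2
  set G : T → ℝ := fun D ↦ ∫ w, llr m P w ∂(Q D) with hG
  have hint' : Integrable (fun p : T × W ↦ llr m P p.2) (π ⊗ₘ Q) :=
    (Measure.integrable_compProd_snd_iff hint.1).mpr hint
  have hGint : Integrable G π := by
    have h : Integrable (llr m P) ((Q ∘ₖ Kernel.const Unit π) ()) := by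
      rwa [← Measure.comp_eq_comp_const_apply]
    simpa using h.integral_comp
  have hGeq : ∫ D, G D ∂π = ∫ w, llr m P w ∂m := by
    rw [hG, ← Measure.integral_compProd hint', hm_def, ← Measure.snd_compProd, Measure.snd,
      integral_map measurable_snd.aemeasurable (stronglyMeasurable_llr _ _).aestronglyMeasurable]
  have hkl : klDiv m P = ENNReal.ofReal (∫ D, G D ∂π) := by
    rw [klDiv, if_pos ⟨hac, hint⟩, hGeq]
  have hnonneg : 0 ≤ ∫ D, G D ∂π := by
    rw [hGeq]
    simpa using InformationTheory.integral_llr_add_sub_measure_univ_nonneg hac hint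
  have hpt : ∀ᵐ D ∂π, klDiv (Q D) P + ENNReal.ofReal (-G D)
      = klDiv (Q D) m + ENNReal.ofReal (G D) := by
    filter_upwards [Measure.ae_integrable_of_integrable_comp hint,
      Measure.ae_ae_of_ae_comp (Measure.rnDeriv_pos hac)] with D h1 h2
    exact klDiv_add_ofReal_eq (Q D) m P hac h2 h1
  have hsum := lintegral_congr_ae hpt
  -- additivity of the lower integral needs measurability of one summand only
  have hGneg : AEMeasurable (fun D ↦ ENNReal.ofReal (-G D)) π :=
    hGint.1.aemeasurable.neg.ennreal_ofReal
  rw [lintegral_add_right' _ hGneg,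
    lintegral_add_right' _ hGint.1.aemeasurable.ennreal_ofReal] at hsum
  have hA : ∫⁻ D, ENNReal.ofReal (G D) ∂π ≠ ⊤ := hGint.lintegral_lt_top.ne
  have hB : ∫⁻ D, ENNReal.ofReal (-G D) ∂π ≠ ⊤ := hGint.neg.lintegral_lt_top.ne
  have hAB : ∫⁻ D, ENNReal.ofReal (G D) ∂π
      = klDiv m P + ∫⁻ D, ENNReal.ofReal (-G D) ∂π := by
    have h := integral_eq_lintegral_pos_part_sub_lintegral_neg_part hGint
    rw [hkl, ← ENNReal.ofReal_toReal hA, ← ENNReal.ofReal_toReal hB,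
      ← ENNReal.ofReal_add hnonneg ENNReal.toReal_nonneg]
    congr 1
    linarith
  rw [hAB, ← add_assoc] at hsum
  exact (ENNReal.add_left_inj hB).mp hsum
end
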